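/- Let S ⊆ [n]² be admissible, Ā ∈ M_S with ‖Ā‖_max ≤ 1, σ > 0, and let A ~ N_S(Ā, σ²Id). Then for every β > 1, E( log_β(c†(A)) ) ≤ log_β((1 + σ)/σ) + 2·log_β(n·|S|) + 2.65/ln β, where c†(A) = max_{k,l ∈ [n]} c†_{kl}(A) and c†_{kl}(A) is the componentwise condition number of the map A ↦ (A⁻¹)_{kl} at A (A is almost surely invertible). -/

import Mathlib

open MeasureTheory ProbabilityTheory
open scoped ENNReal

/-- Componentwise "distance" `d(u,v) = ‖(u−v)/v‖_∞`, valued in `[0,∞]`: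
the `i`-th component of the quotient is `|u i − v i|/|v i|` if `v i ≠ 0`,
`0` if `u i = v i = 0`, and `∞` otherwise. -/
noncomputable def cwDist {ι : Type*} (u v : ι → ℝ) : ℝ≥0∞ :=
  ⨆ i, if v i ≠ 0 then ENNReal.ofReal (|u i - v i| / |v i|)
       else if u i = v i then 0 else ⊤

/-- Componentwise condition number of `F : D ⊆ ℝ^ι → ℝ^κ` at `a`:
`c^F(a) = lim_{δ→0} sup { d(F x, F a)/d(x,a) : x ∈ D, d(x,a) ≤ δ, x ≠ a }`,
the limit being an infimum since the sup is monotone in `δ`. -/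
noncomputable def cwCond {ι κ : Type*} (D : Set (ι → ℝ)) (F : (ι → ℝ) → κ → ℝ)
    (a : ι → ℝ) : ℝ≥0∞ :=
  ⨅ δ ∈ Set.Ioi (0 : ℝ≥0∞),
    ⨆ x ∈ {x ∈ D | cwDist x a ≤ δ ∧ x ≠ a}, cwDist (F x) (F a) / cwDist x a

/-- A matrix viewed as a point of `ℝ^(n×n)`. -/
def matToFun {n : ℕ} (A : Matrix (Fin n) (Fin n) ℝ) : Fin n × Fin n → ℝ :=
  fun p => A p.1 p.2

/-- A point of `ℝ^(n×n)` viewed as a matrix. -/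
def funToMat {n : ℕ} (x : Fin n × Fin n → ℝ) : Matrix (Fin n) (Fin n) ℝ :=
  Matrix.of fun i j => x (i, j)

/-- The componentwise condition number `c^det(A)` of determinant computation at `A`. -/
noncomputable def cDet {n : ℕ} (A : Matrix (Fin n) (Fin n) ℝ) : ℝ≥0∞ :=
  cwCond Set.univ (fun x (_ : Unit) => (funToMat x).det) (matToFun A)

/-- The componentwise condition number `c†_{kl}(A)` of the map `A ↦ (A⁻¹)_{kl}` at `A`. -/
noncomputable def cInv {n : ℕ} (k l : Fin n) (A : Matrix (Fin n) (Fin n) ℝ) : ℝ≥0∞ :=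
  cwCond {x | IsUnit (funToMat x).det}
    (fun x (_ : Unit) => (funToMat x)⁻¹ k l) (matToFun A)

/-- `c†(A) = max_{k,l} c†_{kl}(A)`. -/
noncomputable def cInvMax {n : ℕ} (A : Matrix (Fin n) (Fin n) ℝ) : ℝ≥0∞ :=
  ⨆ k, ⨆ l, cInv k l A

/-- A pair (matrix, right-hand side) viewed as a point of `ℝ^(n×n+n)`. -/
def pairToFun {n : ℕ} (A : Matrix (Fin n) (Fin n) ℝ) (b : Fin n → ℝ) :
    (Fin n × Fin n) ⊕ Fin n → ℝ :=
  Sum.elim (fun p => A p.1 p.2) b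

def funToMat' {n : ℕ} (x : (Fin n × Fin n) ⊕ Fin n → ℝ) : Matrix (Fin n) (Fin n) ℝ :=
  Matrix.of fun i j => x (Sum.inl (i, j))

def funToVec {n : ℕ} (x : (Fin n × Fin n) ⊕ Fin n → ℝ) : Fin n → ℝ :=
  fun i => x (Sum.inr i)

/-- The componentwise condition number `c_k(A,b)` of the map `(A,b) ↦ (A⁻¹b)_k` at `(A,b)`. -/
noncomputable def cLin {n : ℕ} (k : Fin n) (A : Matrix (Fin n) (Fin n) ℝ)
    (b : Fin n → ℝ) : ℝ≥0∞ :=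
  cwCond {x | IsUnit (funToMat' x).det}
    (fun x (_ : Unit) => (Matrix.mulVec (funToMat' x)⁻¹ (funToVec x)) k) (pairToFun A b)

/-- `c(A,b) = max_k c_k(A,b)`. -/
noncomputable def cLinMax {n : ℕ} (A : Matrix (Fin n) (Fin n) ℝ) (b : Fin n → ℝ) : ℝ≥0∞ :=
  ⨆ k, cLin k A b

instance matrixMeasurableSpace {n : ℕ} : MeasurableSpace (Matrix (Fin n) (Fin n) ℝ) :=
  inferInstanceAs (MeasurableSpace (Fin n → Fin n → ℝ))

/-- The distribution `N_S(Ā, σ²Id)` of a random sparse matrix: the entries `a_{ij}` with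
`(i,j) ∈ S` are independent Gaussians `N(ā_{ij}, σ²)`, and `a_{ij} = 0` for `(i,j) ∉ S`. -/
noncomputable def sparseGaussian {n : ℕ} (S : Finset (Fin n × Fin n))
    (Abar : Matrix (Fin n) (Fin n) ℝ) (σ : ℝ) : Measure (Matrix (Fin n) (Fin n) ℝ) :=
  (Measure.pi fun p : S => gaussianReal (Abar p.1.1 p.1.2) ⟨σ ^ 2, sq_nonneg σ⟩).map
    fun g => Matrix.of fun i j => if h : (i, j) ∈ S then g ⟨(i, j), h⟩ else 0

/-- The distribution `N(b̄, σ²Id)` on `ℝⁿ`: independent Gaussian entries `N(b̄_i, σ²)`. -/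
noncomputable def vecGaussian {n : ℕ} (bbar : Fin n → ℝ) (σ : ℝ) : Measure (Fin n → ℝ) :=
  Measure.pi fun i => gaussianReal (bbar i) ⟨σ ^ 2, sq_nonneg σ⟩

/-- `S ⊆ [n]²` is admissible when `M_S` contains an invertible matrix. -/
def Admissible {n : ℕ} (S : Finset (Fin n × Fin n)) : Prop :=
  ∃ B : Matrix (Fin n) (Fin n) ℝ, (∀ i j, (i, j) ∉ S → B i j = 0) ∧ IsUnit B.det

/-!
If `A⁻¹ k l ≠ 0`, perturbing `A` to first order bounds `cInv k l A` by the sum over `i, j` of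
`|A i j * A⁻¹ k i * A⁻¹ j l / A⁻¹ k l|`, and each term is at most the sum of the relative
sensitivities of `det A` and of the cofactor `A.adjugate k l` to the entry `A i j`. As a function of
one Gaussian entry `y`, all others being fixed, such a sensitivity is `y * M / (y * M + R)`. It
exceeds `T` only if `y` is within relative distance about `1 / T` of the root `-R / M`, and since
`|y|` times the density of `y` is bounded this has probability at most `K / T` with
`K = 5 / 2 * ((1 + σ) / σ)`, whatever the values of `M` and `R`.

There are `n² |S|` sensitivities `X q`, so for `c = n² |S| K` the sum of `log⁺ (X q / c)` has
expectation at most `1`. Since `cInvMax A` is at most `2 |S| c` times the exponential of that sum,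
`log (cInvMax A)` has expectation at most
`log (2 |S| c) + 1 = log ((1 + σ) / σ) + 2 log (n |S|) + log 5 + 1`.
-/

section Tail

variable {Ω ι : Type*} [MeasurableSpace Ω] {μ : Measure Ω}

/-- `X` has a reciprocal tail with constant `K`: `ℙ(|X| ≥ t) ≤ K / t` for all `t > 0`. This is the
weak-`L¹` form of the Markov bound; `X` itself need not be integrable. -/
def HasReciprocalTail (X : Ω → ℝ) (K : ℝ) (μ : Measure Ω) : Prop :=
  ∀ t, 0 < t → μ {ω | t ≤ |X ω|} ≤ ENNReal.ofReal (K / t)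

theorem mul_exp_le_abs_of_le_posLog_div {x c t : ℝ} (hc : 0 < c) (ht : 0 < t)
    (h : t ≤ Real.posLog (x / c)) : c * Real.exp t ≤ |x| := by
  have hlog : t ≤ Real.log |x / c| := by
    rw [Real.log_abs]
    exact (le_max_iff.1 h).resolve_left ht.not_ge
  have hpos : 0 < |x / c| := abs_pos.2 fun h0 => by
    rw [h0, abs_zero, Real.log_zero] at hlog
    exact ht.not_ge hlog
  rwa [Real.le_log_iff_exp_le hpos, abs_div, abs_of_pos hc, le_div_iff₀' hc] at hlog

theorem abs_le_mul_exp_of_posLog_div_le {x c t : ℝ} (hc : 0 < c) (h : Real.posLog (x / c) ≤ t) :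
    |x| ≤ c * Real.exp t := by
  rw [← div_le_iff₀' hc, ← abs_of_pos hc, ← abs_div]
  refine Real.le_exp_of_log_le ?_
  rw [Real.log_abs]
  exact (le_max_right _ _).trans h

theorem abs_le_mul_exp_sum_posLog [Fintype ι] {c : ℝ} (hc : 0 < c) (x : ι → ℝ) (i : ι) :
    |x i| ≤ c * Real.exp (∑ j, Real.posLog (x j / c)) :=
  abs_le_mul_exp_of_posLog_div_le hc <|
    Finset.single_le_sum (f := fun j => Real.posLog (x j / c)) (fun _ _ => Real.posLog_nonneg)
      (Finset.mem_univ i)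

theorem HasReciprocalTail.mono {X : Ω → ℝ} {K L : ℝ} (h : HasReciprocalTail X K μ) (hKL : K ≤ L) :
    HasReciprocalTail X L μ := fun t ht =>
  (h t ht).trans (ENNReal.ofReal_le_ofReal (by gcongr))

theorem HasReciprocalTail.lintegral_posLog_le {X : Ω → ℝ} {K c : ℝ} (h : HasReciprocalTail X K μ)
    (hX : AEMeasurable X μ) (hc : 0 < c) :
    ∫⁻ ω, ENNReal.ofReal (Real.posLog (X ω / c)) ∂μ ≤ ENNReal.ofReal (K / c) := by
  rw [lintegral_eq_lintegral_meas_le μ (.of_forall fun _ => Real.posLog_nonneg)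
    (Real.continuous_posLog.measurable.comp_aemeasurable (hX.div_const c))]
  calc ∫⁻ t in Set.Ioi 0, μ {ω | t ≤ Real.posLog (X ω / c)}
      ≤ ∫⁻ t in Set.Ioi 0, ENNReal.ofReal (K / c) * ENNReal.ofReal (Real.exp (-t)) := by
        refine setLIntegral_mono (by fun_prop) fun t ht => ?_
        refine (measure_mono fun ω => mul_exp_le_abs_of_le_posLog_div hc ht).trans
          ((h (c * Real.exp t) (by positivity)).trans_eq ?_)
        rw [← ENNReal.ofReal_mul' (Real.exp_pos _).le, Real.exp_neg, ← div_eq_mul_inv, div_div]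
    _ = ENNReal.ofReal (K / c) * ENNReal.ofReal (∫ t in Set.Ioi (0 : ℝ), Real.exp (-t)) := by
        rw [lintegral_const_mul _ (by fun_prop), ofReal_integral_eq_lintegral_ofReal
          (integrableOn_exp_neg_Ioi 0) (.of_forall fun _ => (Real.exp_pos _).le)]
    _ = ENNReal.ofReal (K / c) := by
        rw [integral_exp_neg_Ioi_zero, ENNReal.ofReal_one, mul_one]

theorem HasReciprocalTail.integrable_posLog {X : Ω → ℝ} {K c : ℝ} (h : HasReciprocalTail X K μ)
    (hX : AEMeasurable X μ) (hc : 0 < c) : Integrable (fun ω => Real.posLog (X ω / c)) μ := by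
  refine ⟨(Real.continuous_posLog.measurable.comp_aemeasurable
    (hX.div_const c)).aestronglyMeasurable, ?_⟩
  rw [hasFiniteIntegral_iff_ofReal (.of_forall fun _ => Real.posLog_nonneg)]
  exact (h.lintegral_posLog_le hX hc).trans_lt ENNReal.ofReal_lt_top

theorem HasReciprocalTail.integral_posLog_le {X : Ω → ℝ} {K c : ℝ} (h : HasReciprocalTail X K μ)
    (hX : AEMeasurable X μ) (hK : 0 ≤ K) (hc : 0 < c) :
    ∫ ω, Real.posLog (X ω / c) ∂μ ≤ K / c := by
  rw [integral_eq_lintegral_of_nonneg_ae (.of_forall fun _ => Real.posLog_nonneg)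
    (h.integrable_posLog hX hc).aestronglyMeasurable]
  exact ENNReal.toReal_le_of_le_ofReal (by positivity) (h.lintegral_posLog_le hX hc)

theorem integral_sum_posLog_le_one [Fintype ι] [Nonempty ι] {X : ι → Ω → ℝ} {K : ℝ}
    (h : ∀ i, HasReciprocalTail (X i) K μ) (hX : ∀ i, AEMeasurable (X i) μ) (hK : 0 < K) :
    ∫ ω, ∑ i, Real.posLog (X i ω / (Fintype.card ι * K)) ∂μ ≤ 1 := by
  have hc : 0 < Fintype.card ι * K := by positivity
  calc ∫ ω, ∑ i, Real.posLog (X i ω / (Fintype.card ι * K)) ∂μ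
      = ∑ i, ∫ ω, Real.posLog (X i ω / (Fintype.card ι * K)) ∂μ :=
        integral_finsetSum _ fun i _ => (h i).integrable_posLog (hX i) hc
    _ ≤ ∑ _ : ι, K / (Fintype.card ι * K) :=
        Finset.sum_le_sum fun i _ => (h i).integral_posLog_le (hX i) hK.le hc
    _ = 1 := by
        rw [Finset.sum_const, Finset.card_univ, nsmul_eq_mul]
        field_simp

theorem integral_le_integral_of_ae_le_of_nonneg {f g : Ω → ℝ} (hg : Integrable g μ)
    (hg0 : 0 ≤ ∫ ω, g ω ∂μ) (hfg : f ≤ᵐ[μ] g) : ∫ ω, f ω ∂μ ≤ ∫ ω, g ω ∂μ := by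
  by_cases hf : Integrable f μ
  · exact integral_mono_ae hf hg hfg
  · rwa [integral_undef hf]

end Tail

section Gaussian

theorem abs_mul_exp_neg_sq_div_two_le_one (z : ℝ) : |z| * Real.exp (-(z ^ 2 / 2)) ≤ 1 := by
  rw [Real.exp_neg, ← div_eq_mul_inv, div_le_one (Real.exp_pos _)]
  calc |z| ≤ z ^ 2 / 2 + 1 := by nlinarith [sq_nonneg (|z| - 1), sq_abs z]
    _ ≤ Real.exp (z ^ 2 / 2) := Real.add_one_le_exp _

theorem abs_mul_gaussianPDFReal_le (m : ℝ) {v : NNReal} (hv : v ≠ 0) (x : ℝ) :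
    |x| * gaussianPDFReal m v x ≤ (|m| + √v) / √(2 * Real.pi * v) := by
  have hv' : (0 : ℝ) < v := by exact_mod_cast hv.pos
  set z := (x - m) / √v with hz
  have hx : x = m + √v * z := by rw [hz]; field_simp; ring
  have hexp : -(x - m) ^ 2 / (2 * v) = -(z ^ 2 / 2) := by
    rw [hz, div_pow, Real.sq_sqrt hv'.le]; field_simp
  have hone : Real.exp (-(z ^ 2 / 2)) ≤ 1 := Real.exp_le_one_iff.2 (by nlinarith [sq_nonneg z])
  have hmain : |x| * Real.exp (-(z ^ 2 / 2)) ≤ |m| + √v :=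
    calc |x| * Real.exp (-(z ^ 2 / 2)) ≤ (|m| + √v * |z|) * Real.exp (-(z ^ 2 / 2)) := by
          gcongr
          simpa [hx, abs_mul, abs_of_nonneg (Real.sqrt_nonneg _)] using abs_add_le m (√v * z)
      _ = |m| * Real.exp (-(z ^ 2 / 2)) + √v * (|z| * Real.exp (-(z ^ 2 / 2))) := by ring
      _ ≤ |m| * 1 + √v * 1 := by gcongr; exact abs_mul_exp_neg_sq_div_two_le_one z
      _ = |m| + √v := by ring
  rw [gaussianPDFReal, hexp, mul_left_comm, ← div_eq_inv_mul]
  gcongr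

/- On `{T |y - s| ≤ |y|}` one has `|y| ≥ T |s| / (T + 1)` and `|y - s| ≤ |s| / (T - 1)`: the density
is at most `C (T + 1) / (T |s|)` there, and the set has length at most `2 |s| / (T - 1)`. -/
theorem withDensity_setOf_mul_abs_sub_le {f : ℝ → ℝ} {C s T : ℝ}
    (hf : ∀ x, |x| * f x ≤ C) (hf0 : ∀ x, 0 ≤ f x) (hs : s ≠ 0) (hT : 1 < T) :
    volume.withDensity (fun x => ENNReal.ofReal (f x)) {y | T * |y - s| ≤ |y|}
      ≤ ENNReal.ofReal (2 * C * (T + 1) / (T * (T - 1))) := by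
  have hT1 : 0 < T - 1 := by linarith
  have hC : 0 ≤ C := (mul_nonneg (abs_nonneg _) (hf0 _)).trans (hf 0)
  have hmeas : MeasurableSet {y : ℝ | T * |y - s| ≤ |y|} :=
    measurableSet_le (by fun_prop) (by fun_prop)
  have hdens : ∀ y ∈ {y : ℝ | T * |y - s| ≤ |y|}, f y ≤ C * (T + 1) / (T * |s|) := by
    intro y (hy : T * |y - s| ≤ |y|)
    have htri : T * |s| ≤ (T + 1) * |y| := by
      have := abs_sub_abs_le_abs_sub s y
      rw [abs_sub_comm] at this
      nlinarith
    rw [le_div_iff₀ (by positivity)]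
    calc f y * (T * |s|) ≤ f y * ((T + 1) * |y|) := by gcongr; exact hf0 y
      _ = |y| * f y * (T + 1) := by ring
      _ ≤ C * (T + 1) := by gcongr; exact hf y
  have hball : {y : ℝ | T * |y - s| ≤ |y|} ⊆ Metric.closedBall s (|s| / (T - 1)) := by
    intro y (hy : T * |y - s| ≤ |y|)
    rw [Metric.mem_closedBall, Real.dist_eq, le_div_iff₀ hT1]
    linarith [abs_sub_abs_le_abs_sub y s]
  rw [withDensity_apply _ hmeas]
  calc ∫⁻ y in {y | T * |y - s| ≤ |y|}, ENNReal.ofReal (f y)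
      ≤ ∫⁻ _ in {y | T * |y - s| ≤ |y|}, ENNReal.ofReal (C * (T + 1) / (T * |s|)) :=
        setLIntegral_mono measurable_const fun y hy => ENNReal.ofReal_le_ofReal (hdens y hy)
    _ = ENNReal.ofReal (C * (T + 1) / (T * |s|)) * volume {y | T * |y - s| ≤ |y|} :=
        setLIntegral_const _ _
    _ ≤ ENNReal.ofReal (C * (T + 1) / (T * |s|)) * ENNReal.ofReal (2 * (|s| / (T - 1))) := by
        gcongr
        exact (measure_mono hball).trans_eq (Real.volume_closedBall s _)
    _ = ENNReal.ofReal (2 * C * (T + 1) / (T * (T - 1))) := by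
        rw [← ENNReal.ofReal_mul (by positivity)]
        congr 1
        field_simp

theorem mul_abs_sub_le_of_le_abs_mul_div {y M R T : ℝ} (hM : M ≠ 0)
    (h : T ≤ |y * M / (y * M + R)|) : T * |y - -R / M| ≤ |y| := by
  have hden : y * M + R = (y - -R / M) * M := by field_simp; ring
  rw [hden, mul_div_mul_right _ _ hM, abs_div] at h
  exact mul_le_of_le_div₀ (abs_nonneg _) (abs_nonneg _) h

theorem two_mul_div_sqrt_two_pi_mul_le {a v T : ℝ} (ha : 0 ≤ a) (hv : 0 < v) (hT : 2 ≤ T) :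
    2 * (a / √(2 * Real.pi * v)) * (T + 1) / (T * (T - 1)) ≤ 5 / 2 * (a / √v) / T := by
  have hpi : (2.4 : ℝ) ≤ √(2 * Real.pi) :=
    Real.le_sqrt_of_sq_le (by linarith [Real.pi_gt_three])
  have hratio : (T + 1) / (T - 1) ≤ 3 := by rw [div_le_iff₀] <;> linarith
  calc 2 * (a / √(2 * Real.pi * v)) * (T + 1) / (T * (T - 1))
      = 2 * (a / (√(2 * Real.pi) * √v)) / T * ((T + 1) / (T - 1)) := by
        rw [Real.sqrt_mul (by positivity), div_mul_div_comm]
    _ ≤ 2 * (a / (2.4 * √v)) / T * 3 := by gcongr; exact div_nonneg (by linarith) (by linarith)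
    _ = 5 / 2 * (a / √v) / T := by field_simp; ring

theorem hasReciprocalTail_gaussianReal_mul_div_add (m : ℝ) {v : NNReal} (hv : v ≠ 0) (M R : ℝ) :
    HasReciprocalTail (fun y => y * M / (y * M + R)) (5 / 2 * ((|m| + √v) / √v))
      (gaussianReal m v) := by
  intro T hT
  have hv' : (0 : ℝ) < v := by exact_mod_cast hv.pos
  rcases lt_or_ge T 2 with hT2 | hT2
  · have hK : 1 ≤ (|m| + √v) / √v := by
      rw [one_le_div (Real.sqrt_pos.2 hv')]
      linarith [abs_nonneg m]
    refine prob_le_one.trans (ENNReal.one_le_ofReal.2 ?_)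
    rw [le_div_iff₀ hT]
    linarith
  by_cases hMR : M = 0 ∨ R = 0
  · have hempty : {y : ℝ | T ≤ |y * M / (y * M + R)|} = ∅ := by
      refine Set.eq_empty_of_forall_notMem fun y (hy : T ≤ _) => ?_
      have hle : |y * M / (y * M + R)| ≤ 1 := by
        rcases hMR with rfl | rfl
        · simp
        · rw [add_zero, abs_div]
          exact div_self_le_one _
      linarith
    rw [hempty, measure_empty]
    exact zero_le
  obtain ⟨hM, hR⟩ := not_or.1 hMR
  calc gaussianReal m v {y | T ≤ |y * M / (y * M + R)|}
      ≤ gaussianReal m v {y | T * |y - -R / M| ≤ |y|} :=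
        measure_mono fun y => mul_abs_sub_le_of_le_abs_mul_div hM
    _ ≤ ENNReal.ofReal (2 * ((|m| + √v) / √(2 * Real.pi * v)) * (T + 1) / (T * (T - 1))) := by
        rw [gaussianReal_of_var_ne_zero m hv]
        exact withDensity_setOf_mul_abs_sub_le (abs_mul_gaussianPDFReal_le m hv)
          (gaussianPDFReal_nonneg m v) (div_ne_zero (neg_ne_zero.2 hR) hM) (by linarith)
    _ ≤ ENNReal.ofReal (5 / 2 * ((|m| + √v) / √v) / T) :=
        ENNReal.ofReal_le_ofReal (two_mul_div_sqrt_two_pi_mul_le (by positivity) hv' hT2)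

end Gaussian

section ProductMeasure

variable {ι : Type*} [Fintype ι] [DecidableEq ι] {X : ι → Type*} [∀ i, MeasurableSpace (X i)]
  (μ : ∀ i, Measure (X i)) [∀ i, IsProbabilityMeasure (μ i)]

theorem measurePreserving_prod_update (i : ι) :
    MeasurePreserving (fun p : (∀ j, X j) × X i => Function.update p.1 i p.2)
      ((Measure.pi μ).prod (μ i)) (Measure.pi μ) := by
  have hmeas : Measurable fun p : (∀ j, X j) × X i => Function.update p.1 i p.2 :=
    measurable_update'
  refine ⟨hmeas, (Measure.pi_eq fun s hs => ?_).symm⟩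
  have hpre : (fun p : (∀ j, X j) × X i => Function.update p.1 i p.2) ⁻¹' Set.univ.pi s
      = Set.univ.pi (Function.update s i Set.univ) ×ˢ s i := by
    ext ⟨x, y⟩
    simp only [Set.mem_preimage, Set.mem_univ_pi, Set.mem_prod]
    constructor
    · intro h
      refine ⟨fun j => ?_, by simpa using h i⟩
      rcases eq_or_ne j i with rfl | hj
      · simp
      · simpa [hj] using h j
    · rintro ⟨h, hy⟩ j
      rcases eq_or_ne j i with rfl | hj
      · simpa using hy
      · simpa [hj] using h j
  rw [Measure.map_apply hmeas (.univ_pi hs), hpre, Measure.prod_prod, Measure.pi_pi,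
    ← Finset.mul_prod_erase _ _ (Finset.mem_univ i),
    ← Finset.mul_prod_erase (a := i) _ (fun j => μ j (s j)) (Finset.mem_univ i),
    Function.update_self, measure_univ, one_mul, mul_comm]
  congr 1
  exact Finset.prod_congr rfl fun j hj => by rw [Function.update_of_ne (Finset.ne_of_mem_erase hj)]

variable {μ}

theorem measure_pi_eq_lintegral_update {s : Set (∀ j, X j)} (hs : MeasurableSet s) (i : ι) :
    Measure.pi μ s = ∫⁻ x, μ i {y | Function.update x i y ∈ s} ∂Measure.pi μ := by
  have hpres := measurePreserving_prod_update μ i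
  rw [← hpres.measure_preimage hs.nullMeasurableSet, Measure.prod_apply (hpres.measurable hs)]
  rfl

theorem HasReciprocalTail.pi {f : (∀ j, X j) → ℝ} {K : ℝ} (hf : Measurable f) (i : ι)
    (h : ∀ x, HasReciprocalTail (fun y => f (Function.update x i y)) K (μ i)) :
    HasReciprocalTail f K (Measure.pi μ) := by
  intro t ht
  rw [measure_pi_eq_lintegral_update (measurableSet_le measurable_const hf.abs) i]
  calc ∫⁻ x, μ i {y | t ≤ |f (Function.update x i y)|} ∂Measure.pi μ
      ≤ ∫⁻ _, ENNReal.ofReal (K / t) ∂Measure.pi μ := lintegral_mono fun x => h x t ht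
    _ = ENNReal.ofReal (K / t) := by rw [lintegral_const, measure_univ, mul_one]

/- The coordinates of a non-root `x₀` are randomized one at a time: each step keeps `f ≠ 0` outside
countably many values of the new coordinate. -/
theorem ae_pi_ne_zero_of_countable_zeros [∀ i, NullSingletonClass (μ i)] {f : (∀ j, X j) → ℝ}
    (hf : Measurable f) (h0 : ∃ x, f x ≠ 0)
    (hcount : ∀ x i, f x ≠ 0 → {y | f (Function.update x i y) = 0}.Countable) :
    ∀ᵐ x ∂Measure.pi μ, f x ≠ 0 := by
  obtain ⟨x₀, hx₀⟩ := h0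
  suffices h : ∀ s : Finset ι, ∀ᵐ x ∂Measure.pi μ, f (s.piecewise x x₀) ≠ 0 by
    simpa using h Finset.univ
  intro s
  induction s using Finset.induction_on with
  | empty => simpa using hx₀
  | insert i s hi ih =>
    have hmeas : Measurable fun x => f ((insert i s).piecewise x x₀) := by
      refine hf.comp (measurable_pi_iff.2 fun j => ?_)
      by_cases hj : j ∈ insert i s
      · simpa only [Finset.piecewise_eq_of_mem _ _ _ hj] using measurable_pi_apply j
      · simp only [Finset.piecewise_eq_of_notMem _ _ _ hj, measurable_const]
    have hupdate : ∀ x y, (insert i s).piecewise (Function.update x i y) x₀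
        = Function.update (s.piecewise x x₀) i y := by
      intro x y
      rw [Finset.piecewise_insert, Function.update_self]
      congr 1
      exact s.piecewise_congr (fun j hj => Function.update_of_ne (ne_of_mem_of_not_mem hj hi) _ _)
        fun _ _ => rfl
    simp only [ae_iff, not_not]
    rw [measure_pi_eq_lintegral_update (measurableSet_eq_fun hmeas measurable_const) i]
    refine (lintegral_congr_ae ?_).trans lintegral_zero
    filter_upwards [ih] with x hx
    simp only [hupdate]
    exact (hcount _ i hx).measure_zero _

end ProductMeasure

section EntrySensitivity

open Matrix

variable {m R K : Type*} [DecidableEq m]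

/-- The matrix `A` with its entry `(i, j)` replaced by `y`. -/
def setEntry (A : Matrix m m R) (i j : m) (y : R) : Matrix m m R :=
  A.updateRow i (Function.update (A i) j y)

@[simp]
theorem setEntry_apply_self (A : Matrix m m R) (i j : m) (y : R) : setEntry A i j y i j = y := by
  rw [setEntry, updateRow_self, Function.update_self]

theorem updateRow_setEntry_of_ne (A : Matrix m m R) {i l : m} (h : i ≠ l) (j : m) (y : R)
    (b : m → R) : (setEntry A i j y).updateRow l b = setEntry (A.updateRow l b) i j y := by
  rw [setEntry, setEntry, updateRow_ne h, updateRow_comm _ h]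

variable [Fintype m]

section CommRing

variable [CommRing R]

@[simp]
theorem adjugate_setEntry_apply (A : Matrix m m R) (i j : m) (y : R) :
    (setEntry A i j y).adjugate j i = A.adjugate j i := by
  rw [adjugate_apply, adjugate_apply, setEntry, updateRow_idem]

theorem det_setEntry (A : Matrix m m R) (i j : m) (y : R) :
    (setEntry A i j y).det = y * A.adjugate j i + (setEntry A i j 0).det := by
  have hrow : Function.update (A i) j y = y • Pi.single j 1 + Function.update (A i) j 0 := by
    ext t
    rcases eq_or_ne t j with rfl | ht <;> simp [*]
  rw [setEntry, hrow, det_updateRow_add, det_updateRow_smul, adjugate_apply, setEntry]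

theorem exists_det_setEntry_affine (A : Matrix m m R) (i j : m) :
    ∃ a b, ∀ y, (setEntry A i j y).det = y * a + b :=
  ⟨_, _, det_setEntry A i j⟩

theorem exists_adjugate_setEntry_affine (k l : m) (A : Matrix m m R) (i j : m) :
    ∃ a b, ∀ y, (setEntry A i j y).adjugate k l = y * a + b := by
  simp only [adjugate_apply]
  rcases eq_or_ne i l with rfl | hil
  · exact ⟨0, (A.updateRow i (Pi.single k 1)).det, fun y => by
      rw [setEntry, updateRow_idem, mul_zero, zero_add]⟩
  · simp only [updateRow_setEntry_of_ne A hil]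
    exact exists_det_setEntry_affine _ i j

end CommRing

variable [Field K]

theorem inv_apply_eq_adjugate_div_det (A : Matrix m m K) (i j : m) :
    A⁻¹ i j = A.adjugate i j / A.det := by
  rw [inv_def, Ring.inverse_eq_inv', Matrix.smul_apply, smul_eq_mul, inv_mul_eq_div]

theorem isUnit_det_of_inv_apply_ne_zero {A : Matrix m m K} {i j : m} (h : A⁻¹ i j ≠ 0) :
    IsUnit A.det := by
  by_contra hA
  exact h (by rw [nonsing_inv_apply_not_isUnit _ hA, Matrix.zero_apply])

/-- The relative sensitivity `(C i j / det C) * ∂ det C / ∂ C i j` of the determinant of `C` to the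
entry `(i, j)`, in the form `C i j * C⁻¹ j i` given by Cramer's rule. -/
noncomputable def detSens (C : Matrix m m K) (i j : m) : K :=
  C i j * C⁻¹ j i

theorem detSens_setEntry (C : Matrix m m K) (i j : m) (y : K) :
    detSens (setEntry C i j y) i j
      = y * C.adjugate j i / (y * C.adjugate j i + (setEntry C i j 0).det) := by
  rw [detSens, inv_apply_eq_adjugate_div_det, setEntry_apply_self, adjugate_setEntry_apply,
    det_setEntry, mul_div_assoc]

/-- The relative sensitivity to the entry `(i, j)` of the cofactor `A.adjugate k l`, the determinant
of `A` with row `l` replaced by the `k`-th basis vector. The entries with `i = l` do not occur in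
this cofactor; there `minorSens` is instead the sensitivity of `det A`, so that the `minorSens k l`
control the condition number of `A⁻¹ k l` without a separate family for `det A`. -/
noncomputable def minorSens (k l : m) (A : Matrix m m K) (i j : m) : K :=
  detSens (if i = l then A else A.updateRow l (Pi.single k 1)) i j

@[simp]
theorem minorSens_self (k i : m) (A : Matrix m m K) (j : m) :
    minorSens k i A i j = detSens A i j := by
  rw [minorSens, if_pos rfl]

theorem minorSens_of_ne (k : m) {i l : m} (h : i ≠ l) (A : Matrix m m K) (j : m) :
    minorSens k l A i j = detSens (A.updateRow l (Pi.single k 1)) i j := by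
  rw [minorSens, if_neg h]

theorem exists_minorSens_setEntry_eq (k l : m) (A : Matrix m m K) (i j : m) :
    ∃ M R : K, ∀ y, minorSens k l (setEntry A i j y) i j = y * M / (y * M + R) := by
  rcases eq_or_ne i l with rfl | hil
  · exact ⟨_, _, fun y => by rw [minorSens_self, detSens_setEntry]⟩
  · exact ⟨_, _, fun y => by
      rw [minorSens_of_ne k hil, updateRow_setEntry_of_ne A hil, detSens_setEntry]⟩

theorem updateRow_single_mulVec_inv {A : Matrix m m K} {i k l : m} (hkl : A⁻¹ k l ≠ 0)
    (hil : i ≠ l) :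
    A.updateRow l (Pi.single k 1) *ᵥ (A⁻¹ *ᵥ (Pi.single i 1 - (A⁻¹ k i / A⁻¹ k l) • Pi.single l 1))
      = Pi.single i 1 := by
  have hA := isUnit_det_of_inv_apply_ne_zero hkl
  rw [updateRow_mulVec, mulVec_mulVec, mul_nonsing_inv A hA, one_mulVec]
  ext r
  rcases eq_or_ne r l with rfl | hr
  · simp [mulVec_sub, mulVec_smul, hil.symm, div_mul_cancel₀ _ hkl]
  · simp [hr]

theorem inv_updateRow_single_apply {A : Matrix m m K} {i k l : m} (hkl : A⁻¹ k l ≠ 0)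
    (hil : i ≠ l) (j : m) :
    (A.updateRow l (Pi.single k 1))⁻¹ j i = A⁻¹ j i - A⁻¹ k i / A⁻¹ k l * A⁻¹ j l := by
  have hB : IsUnit (A.updateRow l (Pi.single k 1)).det := by
    rw [← adjugate_apply, isUnit_iff_ne_zero]
    rw [inv_apply_eq_adjugate_div_det] at hkl
    exact (div_ne_zero_iff.1 hkl).1
  have h := congrArg (fun v => ((A.updateRow l (Pi.single k 1))⁻¹ *ᵥ v) j)
    (updateRow_single_mulVec_inv hkl hil)
  simpa [mulVec_mulVec, nonsing_inv_mul _ hB, mulVec_sub, mulVec_smul] using h.symm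

theorem abs_mul_inv_mul_inv_div_inv_le {A : Matrix m m ℝ} {k l : m} (hkl : A⁻¹ k l ≠ 0)
    (i j : m) :
    |A i j| * |A⁻¹ k i| * |A⁻¹ j l| / |A⁻¹ k l|
      ≤ |minorSens k i A i j| + |minorSens k l A i j| := by
  rw [← abs_mul, ← abs_mul, ← abs_div, minorSens_self]
  rcases eq_or_ne i l with rfl | hil
  · rw [mul_right_comm, mul_div_cancel_right₀ _ hkl]
    exact le_add_of_nonneg_right (abs_nonneg _)
  · have hsub : A i j * A⁻¹ k i * A⁻¹ j l / A⁻¹ k l = detSens A i j - minorSens k l A i j := by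
      rw [minorSens_of_ne k hil, detSens, detSens, inv_updateRow_single_apply hkl hil,
        updateRow_ne hil]
      ring
    rw [hsub]
    exact abs_sub _ _

end EntrySensitivity

section ConditionNumber

open Topology

section CwDist

variable {ι κ : Type*} {u v : ι → ℝ}

theorem abs_sub_le_toReal_cwDist_mul (h : cwDist u v ≠ ⊤) (i : ι) :
    |u i - v i| ≤ (cwDist u v).toReal * |v i| := by
  have hi := le_iSup (fun i => if v i ≠ 0 then ENNReal.ofReal (|u i - v i| / |v i|)
    else if u i = v i then 0 else ⊤) i
  rw [← cwDist] at hi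
  split_ifs at hi with hv huv
  · rw [← div_le_iff₀ (abs_pos.2 hv)]
    exact (ENNReal.ofReal_le_iff_le_toReal h).1 hi
  · simp [huv, not_not.1 hv]
  · exact absurd (top_le_iff.1 hi) h

theorem cwDist_le_ofReal {d : ℝ} (h : ∀ i, |u i - v i| ≤ d * |v i|) :
    cwDist u v ≤ ENNReal.ofReal d := by
  refine iSup_le fun i => ?_
  split_ifs with hv huv
  · exact ENNReal.ofReal_le_ofReal ((div_le_iff₀ (abs_pos.2 hv)).2 (h i))
  · exact zero_le
  · refine absurd (sub_eq_zero.1 (abs_nonpos_iff.1 ?_)) huv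
    simpa [not_not.1 hv] using h i

theorem exists_forall_cwDist_le_mem_of_mem_nhds [Finite ι] {a : ι → ℝ} {s : Set (ι → ℝ)}
    (hs : s ∈ 𝓝 a) : ∃ δ : ℝ, 0 < δ ∧ ∀ x, cwDist x a ≤ ENNReal.ofReal δ → x ∈ s := by
  have := Fintype.ofFinite ι
  obtain ⟨r, hr, hrs⟩ := Metric.nhds_basis_closedBall.mem_iff.1 hs
  have hδ : 0 < r / (‖a‖ + 1) := by positivity
  refine ⟨r / (‖a‖ + 1), hδ, fun x hx => hrs ((dist_pi_le_iff hr.le).2 fun i => ?_)⟩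
  have hfin : cwDist x a ≠ ⊤ := ne_top_of_le_ne_top ENNReal.ofReal_ne_top hx
  calc dist (x i) (a i) ≤ (cwDist x a).toReal * |a i| := abs_sub_le_toReal_cwDist_mul hfin i
    _ ≤ r / (‖a‖ + 1) * (‖a‖ + 1) := by
        gcongr
        · exact ENNReal.toReal_le_of_le_ofReal hδ.le hx
        · exact (norm_le_pi_norm a i).trans (le_add_of_nonneg_right zero_le_one)
    _ = r := by field_simp

theorem cwCond_le_ofReal_of_continuousAt [Finite ι] {D : Set (ι → ℝ)} {F : (ι → ℝ) → κ → ℝ}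
    {a : ι → ℝ} {G : (ι → ℝ) → ℝ} (hG : ContinuousAt G a)
    (h : ∀ x ∈ D, ∀ d, (∀ p, |x p - a p| ≤ d * |a p|) →
      ∀ i, |F x i - F a i| ≤ G x * d * |F a i|) :
    cwCond D F a ≤ ENNReal.ofReal (G a) := by
  refine le_of_forall_gt fun c hc => ?_
  obtain ⟨b, hab, hbc⟩ := exists_between hc
  obtain ⟨δ, hδ, hδG⟩ := exists_forall_cwDist_le_mem_of_mem_nhds
    ((ENNReal.continuous_ofReal.continuousAt.comp hG).eventually_lt_const hab)
  refine lt_of_le_of_lt (iInf₂_le_of_le _ (ENNReal.ofReal_pos.2 hδ) ?_) hbc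
  refine iSup₂_le fun x ⟨hxD, hxδ, _⟩ => ENNReal.div_le_of_le_mul ?_
  have hfin : cwDist x a ≠ ⊤ := ne_top_of_le_ne_top ENNReal.ofReal_ne_top hxδ
  calc cwDist (F x) (F a) ≤ ENNReal.ofReal (G x * (cwDist x a).toReal) :=
        cwDist_le_ofReal (h x hxD _ (abs_sub_le_toReal_cwDist_mul hfin))
    _ = ENNReal.ofReal (G x) * cwDist x a := by
        rw [ENNReal.ofReal_mul' ENNReal.toReal_nonneg, ENNReal.ofReal_toReal hfin]
    _ ≤ b * cwDist x a := by gcongr; exact (hδG x hxδ).le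

end CwDist

theorem inv_apply_sub_inv_apply {m K : Type*} [Fintype m] [DecidableEq m] [Field K]
    {X A : Matrix m m K} (hX : IsUnit X.det) (hA : IsUnit A.det) (k l : m) :
    X⁻¹ k l - A⁻¹ k l = ∑ i, ∑ j, X⁻¹ k i * (A i j - X i j) * A⁻¹ j l := by
  have h : X⁻¹ - A⁻¹ = X⁻¹ * ((A - X) * A⁻¹) := by
    rw [sub_mul, mul_sub, Matrix.mul_nonsing_inv A hA, mul_one,
      Matrix.nonsing_inv_mul_cancel_left _ _ hX]
  rw [← Matrix.sub_apply, h]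
  simp only [Matrix.mul_apply, Finset.mul_sum, Matrix.sub_apply, mul_assoc]

theorem abs_inv_apply_sub_inv_apply_le {m : Type*} [Fintype m] [DecidableEq m]
    {X A : Matrix m m ℝ} (hX : IsUnit X.det) (hA : IsUnit A.det) {d : ℝ}
    (h : ∀ i j, |X i j - A i j| ≤ d * |A i j|) (k l : m) :
    |X⁻¹ k l - A⁻¹ k l| ≤ (∑ i, ∑ j, |A i j| * |X⁻¹ k i| * |A⁻¹ j l|) * d := by
  rw [inv_apply_sub_inv_apply hX hA]
  simp only [Finset.sum_mul]
  refine (Finset.abs_sum_le_sum_abs _ _).trans (Finset.sum_le_sum fun i _ => ?_)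
  refine (Finset.abs_sum_le_sum_abs _ _).trans (Finset.sum_le_sum fun j _ => ?_)
  calc |X⁻¹ k i * (A i j - X i j) * A⁻¹ j l| = |X⁻¹ k i| * |X i j - A i j| * |A⁻¹ j l| := by
        rw [abs_mul, abs_mul, abs_sub_comm]
    _ ≤ |X⁻¹ k i| * (d * |A i j|) * |A⁻¹ j l| := by gcongr; exact h i j
    _ = |A i j| * |X⁻¹ k i| * |A⁻¹ j l| * d := by ring

variable {n : ℕ} {A : Matrix (Fin n) (Fin n) ℝ} {k l : Fin n}

theorem funToMat_matToFun (A : Matrix (Fin n) (Fin n) ℝ) : funToMat (matToFun A) = A := rfl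

theorem continuous_funToMat : Continuous (funToMat (n := n)) :=
  continuous_matrix fun i j => continuous_apply (i, j)

theorem continuousAt_inv_funToMat_apply (hA : IsUnit A.det) (k l : Fin n) :
    ContinuousAt (fun x => (funToMat x)⁻¹ k l) (matToFun A) := by
  simp only [inv_apply_eq_adjugate_div_det]
  exact (continuous_funToMat.matrix_adjugate.matrix_elem k l).continuousAt.div
    continuous_funToMat.matrix_det.continuousAt hA.ne_zero

theorem cInv_le (hkl : A⁻¹ k l ≠ 0) :
    cInv k l A ≤ ENNReal.ofReal
      ((∑ i, ∑ j, |A i j| * |A⁻¹ k i| * |A⁻¹ j l|) / |A⁻¹ k l|) := by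
  have hA := isUnit_det_of_inv_apply_ne_zero hkl
  refine cwCond_le_ofReal_of_continuousAt (G := fun x =>
    (∑ i, ∑ j, |A i j| * |(funToMat x)⁻¹ k i| * |A⁻¹ j l|) / |A⁻¹ k l|) ?_ ?_
  · refine Filter.Tendsto.div_const
      (tendsto_finsetSum _ fun i _ => tendsto_finsetSum _ fun j _ => ?_) _
    exact (tendsto_const_nhds.mul (continuousAt_inv_funToMat_apply hA k i).abs).mul_const _
  · intro x hx d hd _
    simp only [funToMat_matToFun]
    rw [div_mul_eq_mul_div, div_mul_cancel₀ _ (abs_ne_zero.2 hkl)]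
    exact abs_inv_apply_sub_inv_apply_le hx hA (fun i j => hd (i, j)) k l

/-- Membership in `M_S`: the entries of `A` outside `S` vanish. -/
def IsSupportedOn (S : Finset (Fin n × Fin n)) (A : Matrix (Fin n) (Fin n) ℝ) : Prop :=
  ∀ i j, (i, j) ∉ S → A i j = 0

theorem cInv_eq_zero_of_adjugate_apply_eq_zero {S : Finset (Fin n × Fin n)}
    (hA : IsSupportedOn S A) (hadj : ∀ B, IsSupportedOn S B → B.adjugate k l = 0) :
    cInv k l A = 0 := by
  have hinv : ∀ B, IsSupportedOn S B → B⁻¹ k l = 0 := fun B hB => by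
    rw [inv_apply_eq_adjugate_div_det, hadj B hB, zero_div]
  rw [← nonpos_iff_eq_zero, ← ENNReal.ofReal_zero]
  refine cwCond_le_ofReal_of_continuousAt (G := 0) continuousAt_const fun x _ d hd _ => ?_
  have hx : (funToMat x)⁻¹ k l = 0 := hinv _ fun i j hij =>
    abs_nonpos_iff.1 (by simpa [funToMat, matToFun, hA i j hij] using hd (i, j))
  simp [hx, funToMat_matToFun, hinv A hA]

end ConditionNumber

section SparseGaussian

variable {n : ℕ} {S : Finset (Fin n × Fin n)} {Abar : Matrix (Fin n) (Fin n) ℝ} {σ : ℝ}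

/-- The parametrization of `M_S` by `ℝ^S` through which `sparseGaussian` is defined. -/
def sparseMatrix (S : Finset (Fin n × Fin n)) (g : S → ℝ) : Matrix (Fin n) (Fin n) ℝ :=
  Matrix.of fun i j => if h : (i, j) ∈ S then g ⟨(i, j), h⟩ else 0

theorem isSupportedOn_sparseMatrix (g : S → ℝ) : IsSupportedOn S (sparseMatrix S g) :=
  fun i j hij => by simp [sparseMatrix, hij]

theorem IsSupportedOn.exists_sparseMatrix_eq {A : Matrix (Fin n) (Fin n) ℝ}
    (hA : IsSupportedOn S A) : ∃ g, sparseMatrix S g = A := by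
  refine ⟨fun p => A p.1.1 p.1.2, ?_⟩
  ext i j
  by_cases hij : (i, j) ∈ S
  · simp [sparseMatrix, hij]
  · simp [sparseMatrix, hij, hA i j hij]

theorem sparseMatrix_update (g : S → ℝ) (p : S) (y : ℝ) :
    sparseMatrix S (Function.update g p y) = setEntry (sparseMatrix S g) p.1.1 p.1.2 y := by
  obtain ⟨⟨i, j⟩, hp⟩ := p
  ext r s
  rcases eq_or_ne r i with rfl | hr
  · rcases eq_or_ne s j with rfl | hs
    · simp [sparseMatrix, hp]
    · simp [sparseMatrix, setEntry, hs]
  · simp [sparseMatrix, setEntry, hr]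

instance : BorelSpace (Matrix (Fin n) (Fin n) ℝ) :=
  inferInstanceAs (BorelSpace (Fin n → Fin n → ℝ))

theorem continuous_sparseMatrix : Continuous (sparseMatrix S) := by
  refine continuous_matrix fun i j => ?_
  by_cases hij : (i, j) ∈ S
  · simpa [sparseMatrix, hij] using continuous_apply _
  · simpa [sparseMatrix, hij] using continuous_const

theorem sparseGaussian_eq_map : sparseGaussian S Abar σ =
    (Measure.pi fun p : S => gaussianReal (Abar p.1.1 p.1.2) (σ ^ 2).toNNReal).map
      (sparseMatrix S) := by
  rw [Real.toNNReal_of_nonneg (sq_nonneg σ)]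
  rfl

instance : IsProbabilityMeasure (sparseGaussian S Abar σ) := by
  rw [sparseGaussian_eq_map]
  exact Measure.isProbabilityMeasure_map continuous_sparseMatrix.aemeasurable

theorem ae_isSupportedOn_sparseGaussian : ∀ᵐ A ∂sparseGaussian S Abar σ, IsSupportedOn S A := by
  simp only [IsSupportedOn, ae_all_iff]
  intro i j hij
  rw [sparseGaussian_eq_map]
  refine (ae_map_iff continuous_sparseMatrix.aemeasurable
    (measurableSet_eq_fun (continuous_id.matrix_elem i j).measurable measurable_const)).2 ?_
  exact .of_forall fun g => isSupportedOn_sparseMatrix g i j hij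

theorem HasReciprocalTail.sparseGaussian {f : Matrix (Fin n) (Fin n) ℝ → ℝ} (hf : Measurable f)
    (hσ : 0 < σ) (p : S)
    (h : ∀ A, ∃ M R, ∀ y, f (setEntry A p.1.1 p.1.2 y) = y * M / (y * M + R)) :
    HasReciprocalTail f (5 / 2 * ((|Abar p.1.1 p.1.2| + σ) / σ)) (sparseGaussian S Abar σ) := by
  intro t ht
  rw [sparseGaussian_eq_map, Measure.map_apply continuous_sparseMatrix.measurable
    (measurableSet_le measurable_const hf.abs)]
  refine HasReciprocalTail.pi (f := f ∘ sparseMatrix S)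
    (hf.comp continuous_sparseMatrix.measurable) p (fun g => ?_) t ht
  obtain ⟨M, R, hMR⟩ := h (sparseMatrix S g)
  have hv : (σ ^ 2).toNNReal ≠ 0 := (Real.toNNReal_pos.2 (pow_pos hσ 2)).ne'
  simpa only [Function.comp_apply, sparseMatrix_update, hMR, Real.coe_toNNReal _ (sq_nonneg σ),
    Real.sqrt_sq hσ.le] using hasReciprocalTail_gaussianReal_mul_div_add (Abar p.1.1 p.1.2) hv M R

theorem ae_sparseGaussian_ne_zero_of_affine {f : Matrix (Fin n) (Fin n) ℝ → ℝ} (hf : Measurable f)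
    (hσ : 0 < σ) (haff : ∀ A i j, ∃ a b, ∀ y, f (setEntry A i j y) = y * a + b)
    (h0 : ∃ B, IsSupportedOn S B ∧ f B ≠ 0) : ∀ᵐ A ∂sparseGaussian S Abar σ, f A ≠ 0 := by
  have hv : (σ ^ 2).toNNReal ≠ 0 := (Real.toNNReal_pos.2 (pow_pos hσ 2)).ne'
  have := fun p : S => nullSingletonClass_gaussianReal (μ := Abar p.1.1 p.1.2) hv
  rw [sparseGaussian_eq_map]
  refine (ae_map_iff continuous_sparseMatrix.aemeasurable
    (measurableSet_eq_fun hf measurable_const).compl).2 ?_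
  refine ae_pi_ne_zero_of_countable_zeros (hf.comp continuous_sparseMatrix.measurable) ?_ ?_
  · obtain ⟨B, hB, hfB⟩ := h0
    obtain ⟨g, rfl⟩ := hB.exists_sparseMatrix_eq
    exact ⟨g, hfB⟩
  · intro g p hg
    obtain ⟨a, b, hab⟩ := haff (sparseMatrix S g) p.1.1 p.1.2
    have hval : ∀ y, f (sparseMatrix S (Function.update g p y)) = y * a + b := fun y => by
      rw [sparseMatrix_update, hab]
    have hne : g p * a + b ≠ 0 := by rwa [← hval, Function.update_eq_self]
    refine Set.Subsingleton.countable fun y (hy : f _ = 0) z (hz : f _ = 0) => ?_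
    rw [hval] at hy hz
    have ha : a ≠ 0 := fun ha => hne (by rw [ha] at hy ⊢; linarith)
    exact mul_right_cancel₀ ha (by linarith)

end SparseGaussian

section LogConditionNumber

variable {n : ℕ} {S : Finset (Fin n × Fin n)} {Abar : Matrix (Fin n) (Fin n) ℝ} {σ : ℝ}

theorem ae_sparseGaussian_inv_apply_ne_zero (hS : Admissible S) (hσ : 0 < σ) {k l : Fin n}
    (h : ∃ B, IsSupportedOn S B ∧ B.adjugate k l ≠ 0) :
    ∀ᵐ A ∂sparseGaussian S Abar σ, A⁻¹ k l ≠ 0 := by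
  obtain ⟨B, hB, hdet⟩ := hS
  filter_upwards [ae_sparseGaussian_ne_zero_of_affine continuous_id.matrix_det.measurable hσ
      exists_det_setEntry_affine ⟨B, hB, hdet.ne_zero⟩,
    ae_sparseGaussian_ne_zero_of_affine (continuous_id.matrix_adjugate.matrix_elem k l).measurable
      hσ (exists_adjugate_setEntry_affine k l) h] with A hA hAkl
  rw [inv_apply_eq_adjugate_div_det]
  exact div_ne_zero hAkl hA

theorem cInv_le_of_abs_minorSens_le {A : Matrix (Fin n) (Fin n) ℝ} (hA : IsSupportedOn S A)
    {k l : Fin n} (hkl : A⁻¹ k l ≠ 0) {b : ℝ}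
    (hb : ∀ k l, ∀ p ∈ S, |minorSens k l A p.1 p.2| ≤ b) :
    cInv k l A ≤ ENNReal.ofReal (2 * S.card * b) := by
  refine (cInv_le hkl).trans (ENNReal.ofReal_le_ofReal ?_)
  calc (∑ i, ∑ j, |A i j| * |A⁻¹ k i| * |A⁻¹ j l|) / |A⁻¹ k l|
      = ∑ p : Fin n × Fin n, |A p.1 p.2| * |A⁻¹ k p.1| * |A⁻¹ p.2 l| / |A⁻¹ k l| := by
        rw [← Fintype.sum_prod_type', Finset.sum_div]
    _ = ∑ p ∈ S, |A p.1 p.2| * |A⁻¹ k p.1| * |A⁻¹ p.2 l| / |A⁻¹ k l| := by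
        refine (Finset.sum_subset S.subset_univ fun p _ hp => ?_).symm
        rw [hA p.1 p.2 hp, abs_zero, zero_mul, zero_mul, zero_div]
    _ ≤ ∑ _p ∈ S, (b + b) := Finset.sum_le_sum fun p hp =>
        (abs_mul_inv_mul_inv_div_inv_le hkl p.1 p.2).trans
          (add_le_add (hb k p.1 p hp) (hb k l p hp))
    _ = 2 * S.card * b := by
        rw [Finset.sum_const, nsmul_eq_mul]
        ring

/-- The total logarithmic excess of the sensitivities `minorSens k l A`, at the entries in `S`, over
the level `c`. -/
noncomputable def sensExcess (S : Finset (Fin n × Fin n)) (c : ℝ)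
    (A : Matrix (Fin n) (Fin n) ℝ) : ℝ :=
  ∑ q : (Fin n × Fin n) × S, Real.posLog (minorSens q.1.1 q.1.2 A q.2.1.1 q.2.1.2 / c)

theorem sensExcess_nonneg {c : ℝ} {A : Matrix (Fin n) (Fin n) ℝ} : 0 ≤ sensExcess S c A :=
  Finset.sum_nonneg fun _ _ => Real.posLog_nonneg

theorem abs_minorSens_le_mul_exp_sensExcess {c : ℝ} (hc : 0 < c) (A : Matrix (Fin n) (Fin n) ℝ)
    (k l : Fin n) {p : Fin n × Fin n} (hp : p ∈ S) :
    |minorSens k l A p.1 p.2| ≤ c * Real.exp (sensExcess S c A) :=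
  abs_le_mul_exp_sum_posLog hc
    (fun q : (Fin n × Fin n) × S => minorSens q.1.1 q.1.2 A q.2.1.1 q.2.1.2) ((k, l), ⟨p, hp⟩)

theorem ae_cInvMax_le (hS : Admissible S) (hσ : 0 < σ) {c : ℝ} (hc : 0 < c) :
    ∀ᵐ A ∂sparseGaussian S Abar σ,
      cInvMax A ≤ ENNReal.ofReal (2 * S.card * (c * Real.exp (sensExcess S c A))) := by
  have hcInv : ∀ k l, ∀ᵐ A ∂sparseGaussian S Abar σ,
      cInv k l A ≤ ENNReal.ofReal (2 * S.card * (c * Real.exp (sensExcess S c A))) := by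
    intro k l
    by_cases h : ∃ B, IsSupportedOn S B ∧ B.adjugate k l ≠ 0
    · filter_upwards [ae_isSupportedOn_sparseGaussian, ae_sparseGaussian_inv_apply_ne_zero hS hσ h]
        with A hA hkl
      exact cInv_le_of_abs_minorSens_le hA hkl fun k l p hp =>
        abs_minorSens_le_mul_exp_sensExcess hc A k l hp
    · push Not at h
      filter_upwards [ae_isSupportedOn_sparseGaussian] with A hA
      rw [cInv_eq_zero_of_adjugate_apply_eq_zero hA h]
      exact zero_le
  filter_upwards [ae_all_iff.2 fun k => ae_all_iff.2 (hcInv k)] with A hA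
  exact iSup₂_le hA

theorem measurable_minorSens (k l i j : Fin n) :
    Measurable fun A : Matrix (Fin n) (Fin n) ℝ => minorSens k l A i j := by
  have hdetSens : Measurable fun A : Matrix (Fin n) (Fin n) ℝ => detSens A i j := by
    simp only [detSens, inv_apply_eq_adjugate_div_det]
    exact (continuous_id.matrix_elem i j).measurable.mul
      ((continuous_id.matrix_adjugate.matrix_elem j i).measurable.div
        continuous_id.matrix_det.measurable)
  unfold minorSens
  split_ifs
  · exact hdetSens
  · exact hdetSens.comp (continuous_id.matrix_updateRow l continuous_const).measurable

theorem hasReciprocalTail_minorSens (hmax : ∀ i j, |Abar i j| ≤ 1) (hσ : 0 < σ) (k l : Fin n)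
    (p : S) : HasReciprocalTail (fun A => minorSens k l A p.1.1 p.1.2) (5 / 2 * ((1 + σ) / σ))
      (sparseGaussian S Abar σ) := by
  refine (HasReciprocalTail.sparseGaussian (measurable_minorSens k l p.1.1 p.1.2) hσ p fun A =>
    exists_minorSens_setEntry_eq k l A p.1.1 p.1.2).mono ?_
  gcongr
  exact hmax _ _

theorem integrable_sensExcess (hmax : ∀ i j, |Abar i j| ≤ 1) (hσ : 0 < σ) {c : ℝ} (hc : 0 < c) :
    Integrable (sensExcess S c) (sparseGaussian S Abar σ) :=
  integrable_finsetSum _ fun q _ => (hasReciprocalTail_minorSens hmax hσ q.1.1 q.1.2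
    q.2).integrable_posLog (measurable_minorSens _ _ _ _).aemeasurable hc

theorem integral_sensExcess_le_one [NeZero n] (hS : S.Nonempty) (hmax : ∀ i j, |Abar i j| ≤ 1)
    (hσ : 0 < σ) :
    ∫ A, sensExcess S (n ^ 2 * S.card * (5 / 2 * ((1 + σ) / σ))) A ∂sparseGaussian S Abar σ
      ≤ 1 := by
  have : Nonempty S := hS.to_subtype
  have hcard : (Fintype.card ((Fin n × Fin n) × S) : ℝ) = n ^ 2 * S.card := by
    simp [sq]
  rw [← hcard]
  exact integral_sum_posLog_le_one
    (fun q : (Fin n × Fin n) × S => hasReciprocalTail_minorSens hmax hσ q.1.1 q.1.2 q.2)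
    (fun q => (measurable_minorSens _ _ _ _).aemeasurable) (by positivity)

theorem Admissible.nonempty [NeZero n] (hS : Admissible S) : S.Nonempty := by
  obtain ⟨B, hB, hdet⟩ := hS
  rw [Finset.nonempty_iff_ne_empty]
  rintro rfl
  have hB0 : B = 0 := Matrix.ext fun i j => hB i j (Finset.notMem_empty _)
  exact hdet.ne_zero (by rw [hB0, Matrix.det_zero])

theorem log_toReal_le_of_le_ofReal_mul_exp {x : ℝ≥0∞} {w t : ℝ} (hw : 1 ≤ w) (ht : 0 ≤ t)
    (h : x ≤ ENNReal.ofReal (w * Real.exp t)) : Real.log x.toReal ≤ Real.log w + t := by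
  have hx : x.toReal ≤ w * Real.exp t := ENNReal.toReal_le_of_le_ofReal (by positivity) h
  rcases ENNReal.toReal_nonneg.eq_or_lt' with hx0 | hx0
  · rw [hx0, Real.log_zero]
    linarith [Real.log_nonneg hw]
  · calc Real.log x.toReal ≤ Real.log (w * Real.exp t) := Real.log_le_log hx0 hx
      _ = Real.log w + t := by
        rw [Real.log_mul (by positivity) (Real.exp_ne_zero t), Real.log_exp]

theorem log_five_le : Real.log 5 ≤ 1.65 := by
  have h5 : (5 : ℝ) = 2 * 2 * (5 / 4) := by norm_num
  rw [h5, Real.log_mul (by norm_num) (by norm_num), Real.log_mul (by norm_num) (by norm_num)]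
  linarith [Real.log_two_lt_d9, Real.log_le_sub_one_of_pos (show (0 : ℝ) < 5 / 4 by norm_num)]

theorem log_five_mul_mul_sq_le {a b : ℝ} (ha : 0 < a) (hb : 0 < b) :
    Real.log (5 * a * b ^ 2) ≤ Real.log a + 2 * Real.log b + 1.65 := by
  rw [Real.log_mul (by positivity) (by positivity), Real.log_mul (by norm_num) ha.ne', Real.log_pow]
  push_cast
  linarith [log_five_le]

theorem one_le_five_mul_div_mul_sq [NeZero n] (hS : S.Nonempty) (hσ : 0 < σ) :
    1 ≤ 5 * ((1 + σ) / σ) * (n * S.card) ^ 2 := by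
  have hn : 1 ≤ (n : ℝ) := Nat.one_le_cast.2 NeZero.one_le
  have hcard : 1 ≤ (S.card : ℝ) := Nat.one_le_cast.2 hS.card_pos
  have hratio : 1 ≤ (1 + σ) / σ := by
    rw [one_le_div hσ]
    linarith
  exact one_le_mul_of_one_le_of_one_le (one_le_mul_of_one_le_of_one_le (by norm_num) hratio)
    (one_le_pow₀ (one_le_mul_of_one_le_of_one_le hn hcard))

theorem ae_log_cInvMax_le [NeZero n] (hS : Admissible S) (hσ : 0 < σ) :
    ∀ᵐ A ∂sparseGaussian S Abar σ, Real.log (cInvMax A).toReal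
      ≤ Real.log (5 * ((1 + σ) / σ) * (n * S.card) ^ 2)
        + sensExcess S (n ^ 2 * S.card * (5 / 2 * ((1 + σ) / σ))) A := by
  have hn : 0 < (n : ℝ) := Nat.cast_pos.2 (NeZero.pos n)
  have hcard : 0 < (S.card : ℝ) := Nat.cast_pos.2 hS.nonempty.card_pos
  filter_upwards [ae_cInvMax_le hS hσ
    (show 0 < n ^ 2 * S.card * (5 / 2 * ((1 + σ) / σ)) by positivity)] with A hA
  refine log_toReal_le_of_le_ofReal_mul_exp (one_le_five_mul_div_mul_sq hS.nonempty hσ)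
    sensExcess_nonneg (hA.trans_eq ?_)
  congr 1
  ring

theorem integral_log_cInvMax_le [NeZero n] (hS : Admissible S) (hmax : ∀ i j, |Abar i j| ≤ 1)
    (hσ : 0 < σ) :
    ∫ A, Real.log (cInvMax A).toReal ∂sparseGaussian S Abar σ
      ≤ Real.log ((1 + σ) / σ) + 2 * Real.log (n * S.card) + 2.65 := by
  have hn : 0 < (n : ℝ) := Nat.cast_pos.2 (NeZero.pos n)
  have hcard : 0 < (S.card : ℝ) := Nat.cast_pos.2 hS.nonempty.card_pos
  set c := n ^ 2 * S.card * (5 / 2 * ((1 + σ) / σ))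
  set w := 5 * ((1 + σ) / σ) * (n * S.card) ^ 2
  have hlogw : 0 ≤ Real.log w := Real.log_nonneg (one_le_five_mul_div_mul_sq hS.nonempty hσ)
  have hint : Integrable (sensExcess S c) (sparseGaussian S Abar σ) :=
    integrable_sensExcess hmax hσ (by positivity)
  calc ∫ A, Real.log (cInvMax A).toReal ∂sparseGaussian S Abar σ
      ≤ ∫ A, (Real.log w + sensExcess S c A) ∂sparseGaussian S Abar σ :=
        integral_le_integral_of_ae_le_of_nonneg ((integrable_const _).add hint)
          (integral_nonneg fun _ => add_nonneg hlogw sensExcess_nonneg) (ae_log_cInvMax_le hS hσ)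
    _ = Real.log w + ∫ A, sensExcess S c A ∂sparseGaussian S Abar σ := by
        rw [integral_add (integrable_const _) hint, integral_const, probReal_univ, one_smul]
    _ ≤ Real.log ((1 + σ) / σ) + 2 * Real.log (n * S.card) + 1.65 + 1 :=
        add_le_add (log_five_mul_mul_sq_le (by positivity) (by positivity))
          (integral_sensExcess_le_one hS.nonempty hmax hσ)
    _ = Real.log ((1 + σ) / σ) + 2 * Real.log (n * S.card) + 2.65 := by ring

end LogConditionNumber

/-- Let `S ⊆ [n]²` be admissible, `Ā ∈ M_S` with `‖Ā‖_max ≤ 1`, `σ > 0`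
and `A ~ N_S(Ā, σ²Id)`. For every `β > 1`,
`E(log_β(c†(A))) ≤ log_β((1+σ)/σ) + 2·log_β(n·|S|) + 2.65/ln β`,
where `c†(A) = max_{k,l} c†_{kl}(A)`. -/
theorem expectation_log_cInvMax_le {n : ℕ} (S : Finset (Fin n × Fin n)) (hS : Admissible S)
    (Abar : Matrix (Fin n) (Fin n) ℝ) (hsupp : ∀ i j, (i, j) ∉ S → Abar i j = 0)
    (hmax : ∀ i j, |Abar i j| ≤ 1) (σ : ℝ) (hσ : 0 < σ)
    (β : ℝ) (hβ : 1 < β) :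
    ∫ A, Real.log (cInvMax A).toReal / Real.log β ∂(sparseGaussian S Abar σ)
      ≤ Real.log ((1 + σ) / σ) / Real.log β
          + 2 * (Real.log ((n : ℝ) * S.card) / Real.log β) + 2.65 / Real.log β := by
  have hlogβ : 0 < Real.log β := Real.log_pos hβ
  have hlogσ : 0 ≤ Real.log ((1 + σ) / σ) :=
    Real.log_nonneg ((one_le_div hσ).2 (by linarith))
  have hbound : ∫ A, Real.log (cInvMax A).toReal ∂sparseGaussian S Abar σ
      ≤ Real.log ((1 + σ) / σ) + 2 * Real.log (n * S.card) + 2.65 := by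
    rcases eq_zero_or_neZero n with rfl | _
    · simp only [cInvMax, iSup_of_empty, bot_eq_zero, ENNReal.toReal_zero, Real.log_zero,
        integral_zero, Nat.cast_zero, zero_mul]
      linarith
    · exact integral_log_cInvMax_le hS hmax hσ
  rw [integral_div, ← mul_div_assoc, ← add_div, ← add_div]
  exact div_le_div_of_nonneg_right hbound hlogβ.le
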